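/- arXiv:1903.05852 — 8 statements merged into one kernel-verified Lean document; each statement's English description precedes it below -/
import Mathlib

section
/- Let r₁, r₂ be relations from a set X to a set Y, let 𝒞 = {U ⊆ X | r₁U = r₂U}, and let G be a generating subset of 𝒞. Define a relation r from G to X by U r x ⟺ x ∈ U. Then r₁ ∘ r = r₂ ∘ r, and for every set Z and every relation s from Z to X with r₁ ∘ s = r₂ ∘ s, the relation s̄ from Z to G defined by z s̄ U ⟺ U ⊆ sz (where sz = {x ∈ X | z s x}) satisfies r ∘ s̄ = s. In particular, r is a weak equaliser of r₁ and r₂ in the category of sets and relations. -/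
/-- Image of a subset under a relation: `rU = {y | ∃ x ∈ U, r x y}`. -/
def RelImage {X Y : Type*} (r : X → Y → Prop) (U : Set X) : Set Y :=
  {y | ∃ x ∈ U, r x y}

/-- Composition of relations, applying `r` first and then `s`
(i.e. the paper's `s ∘ r`): `x (s ∘ r) z ↔ ∃ y, r x y ∧ s y z`. -/
def RelComp {X Y Z : Type*} (r : X → Y → Prop) (s : Y → Z → Prop) : X → Z → Prop :=
  fun x z => ∃ y, r x y ∧ s y z

theorem stmt_3 {X Y : Type u} (r₁ r₂ : X → Y → Prop) (G : Set (Set X))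
    (hGsub : ∀ U ∈ G, RelImage r₁ U = RelImage r₂ U)
    (hGgen : ∀ U : Set X, RelImage r₁ U = RelImage r₂ U →
      ∀ x ∈ U, ∃ β ∈ G, x ∈ β ∧ β ⊆ U) :
    -- the relation `r` from `G` to `X` given by membership
    (RelComp (fun (U : {U // U ∈ G}) (x : X) => x ∈ U.1) r₁ =
     RelComp (fun (U : {U // U ∈ G}) (x : X) => x ∈ U.1) r₂) ∧
    ∀ (Z : Type u) (s : Z → X → Prop), RelComp s r₁ = RelComp s r₂ →
      RelComp (fun (z : Z) (U : {U // U ∈ G}) => U.1 ⊆ {x | s z x})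
        (fun (U : {U // U ∈ G}) (x : X) => x ∈ U.1) = s := by
  constructor
  · funext U y
    exact congrFun (hGsub U.1 U.2) y
  · intro Z s hs
    funext z x
    apply propext
    constructor
    · rintro ⟨U, hU, hx⟩
      exact hU hx
    · intro hx
      -- The hypothesis on `s`, read at `z`, says that the fibre `{x | s z x}` is itself
      -- equalised by `r₁` and `r₂`, so a generator fits between `x` and this fibre.
      obtain ⟨β, hβ, hxβ, hsub⟩ := hGgen {x | s z x} (congrFun hs z) x hx
      exact ⟨⟨β, hβ⟩, hsub, hxβ⟩
end

section
/- Let R be a set of rules on a set S, and define relations r₁, r₂ from S to R by x r₁ (a,b) ⟺ x ∈ a and x r₂ (a,b) ⟺ x ∈ b. Suppose a relation e from a set E to S satisfies r₁ ∘ e = r₂ ∘ e and the weak equaliser property: for every set Z and every relation s from Z to S with r₁ ∘ s = r₂ ∘ s there exists a relation s̄ from Z to E with e ∘ s̄ = s. Then G = { {y ∈ S | x e y} | x ∈ E } is a generating subset of the class of R-biclosed subsets of S; in particular every set {y ∈ S | x e y} for x ∈ E is R-biclosed. -/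
/-- A subset `α` is biclosed under a rule `(a, b)`: `a ∩ α` is nonempty iff `b ∩ α` is. -/
def RuleBiclosed {S : Type*} (p : Set S × Set S) (α : Set S) : Prop :=
  (p.1 ∩ α).Nonempty ↔ (p.2 ∩ α).Nonempty

/-- `α` is `R`-biclosed if it is biclosed under every rule in `R`. -/
def RBiclosed {S : Type*} (R : Set (Set S × Set S)) (α : Set S) : Prop :=
  ∀ p ∈ R, RuleBiclosed p α

/-- The relation `r₁` from `S` to `R`: `x r₁ (a,b) ↔ x ∈ a`. -/
def relFst {S : Type*} (R : Set (Set S × Set S)) : S → {p // p ∈ R} → Prop :=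
  fun x p => x ∈ p.1.1

/-- The relation `r₂` from `S` to `R`: `x r₂ (a,b) ↔ x ∈ b`. -/
def relSnd {S : Type*} (R : Set (Set S × Set S)) : S → {p // p ∈ R} → Prop :=
  fun x p => x ∈ p.1.2

theorem relComp_eq_iff {S Z : Type*} (R : Set (Set S × Set S)) (s : Z → S → Prop) :
    RelComp s (relFst R) = RelComp s (relSnd R) ↔ ∀ z, RBiclosed R {y | s z y} := by
  simp only [funext_iff, eq_iff_iff, RelComp, relFst, relSnd, RBiclosed, RuleBiclosed,
    Set.Nonempty, Set.mem_inter_iff, Set.mem_ofPred_eq, Subtype.forall, and_comm]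

theorem stmt_4 {S E : Type u} (R : Set (Set S × Set S)) (e : E → S → Prop)
    -- e equalises r₁ and r₂
    (heq : RelComp e (relFst R) = RelComp e (relSnd R))
    -- the weak equaliser property
    (hweak : ∀ (Z : Type u) (s : Z → S → Prop),
      RelComp s (relFst R) = RelComp s (relSnd R) →
      ∃ sb : Z → E → Prop, RelComp sb e = s) :
    -- every `re` for `e ∈ E` is R-biclosed, and G generates the R-biclosed class
    (∀ x : E, RBiclosed R {y | e x y}) ∧
    (∀ α : Set S, RBiclosed R α → ∀ z ∈ α,
      ∃ β ∈ {β | ∃ x : E, β = {y | e x y}}, z ∈ β ∧ β ⊆ α) := by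
  refine ⟨(relComp_eq_iff R e).1 heq, fun α hα z hz => ?_⟩
  obtain ⟨sb, hsb⟩ := hweak PUnit (fun _ y => y ∈ α) ((relComp_eq_iff R _).2 fun _ => hα)
  have key : ∀ y, (∃ x, sb PUnit.unit x ∧ e x y) ↔ y ∈ α := fun y =>
    iff_of_eq (congrFun (congrFun hsb PUnit.unit) y)
  obtain ⟨x, hx, hxz⟩ := (key z).2 hz
  exact ⟨{y | e x y}, ⟨x, rfl⟩, hxz, fun y hy => (key y).1 ⟨x, hx, hy⟩⟩
end

section
/- The category Rel of sets and relations has weak equalisers: for every parallel pair of morphisms f, g : X ⟶ Y in Rel there exist an object E and a morphism e : E ⟶ X such that e ≫ f = e ≫ g, and for every morphism h : Z ⟶ X with h ≫ f = h ≫ g there exists a morphism h̄ : Z ⟶ E with h̄ ≫ e = h. -/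
open CategoryTheory

/-!
A relation `h : Z ⟶ X` is a family of subsets `h[z] ⊆ X`, and `h ≫ f = h ≫ g` says that every `h[z]`
has the same direct image under `f` and under `g`. So take `E` to be the set of all subsets of `X`
with equal images under `f` and `g`, with `e` the membership relation; `h` factors through `e` by
the function `z ↦ h[z]`, viewed as a relation.
-/

/-- The subsets of `X`, encoded as predicates, whose direct images under `f` and `g` coincide. -/
def EqualisedSubset {X Y : RelCat} (f g : X ⟶ Y) : RelCat :=
  {A : X → Prop // ∀ y : Y, (∃ x, A x ∧ (x, y) ∈ f.rel) ↔ ∃ x, A x ∧ (x, y) ∈ g.rel}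

/-- The category `Rel` of sets and relations has weak equalisers. -/
theorem stmt_5 {X Y : RelCat} (f g : X ⟶ Y) :
    ∃ (E : RelCat) (e : E ⟶ X), e ≫ f = e ≫ g ∧
      ∀ (Z : RelCat) (h : Z ⟶ X), h ≫ f = h ≫ g → ∃ hbar : Z ⟶ E, hbar ≫ e = h := by
  refine ⟨EqualisedSubset f g, RelCat.Hom.ofRel {p | p.1.1 p.2}, ?_, ?_⟩
  · apply RelCat.Hom.ext
    ext ⟨A, y⟩
    exact A.2 y
  · intro Z h hh
    have key : ∀ (z : Z) (y : Y), (∃ x, (z, x) ∈ h.rel ∧ (x, y) ∈ f.rel) ↔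
        ∃ x, (z, x) ∈ h.rel ∧ (x, y) ∈ g.rel := fun z y => by
      rw [← RelCat.Hom.rel_comp_apply₂ h f, hh, RelCat.Hom.rel_comp_apply₂ h g]
    refine ⟨RelCat.Hom.ofRel {p | p.2.1 = fun x => (p.1, x) ∈ h.rel}, ?_⟩
    apply RelCat.Hom.ext
    ext ⟨z, x⟩
    constructor
    · rintro ⟨A, hA, hx⟩
      exact (congrFun hA x).mp hx
    · intro hx
      exact ⟨⟨fun x => (z, x) ∈ h.rel, key z⟩, rfl, hx⟩
end

section
/- The category Rel of sets and relations has weak coequalisers: for every parallel pair of morphisms f, g : X ⟶ Y in Rel there exist an object Q and a morphism q : Y ⟶ Q such that f ≫ q = g ≫ q, and for every morphism h : Y ⟶ Z with f ≫ h = g ≫ h there exists a morphism h̄ : Q ⟶ Z with q ≫ h̄ = h. -/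
/-!
A relation `h : Y ⟶ Z` coequalises `f` and `g` exactly when each of its fibres
`{y | y ~[h.rel] z}` is *balanced*: it has the same preimage under `f` as under `g`. Taking `Q` to
be the set of all balanced subsets of `Y` and `q` the membership relation therefore gives a
coequalising morphism, and `h` factors through it by relating a balanced set `S` to `z` when
`S` is the fibre of `h` over `z`.
-/

open CategoryTheory

/-- The balanced subsets of `Y`: those with the same preimage under `f` and under `g`.
Subsets are encoded as predicates, because `Y : RelCat` is a type only up to unfolding `RelCat`. -/
def BalancedSets {X Y : RelCat} (f g : X ⟶ Y) : RelCat :=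
  {S : Y → Prop // ∀ x : X, (∃ y, (x, y) ∈ f.rel ∧ S y) ↔ ∃ y, (x, y) ∈ g.rel ∧ S y}

/-- The membership relation from `Y` to the balanced subsets of `Y`. -/
def balancedMem {X Y : RelCat} (f g : X ⟶ Y) : Y ⟶ BalancedSets f g :=
  RelCat.Hom.ofRel {p : Y × BalancedSets f g | p.2.1 p.1}

/-- The category `Rel` of sets and relations has weak coequalisers. -/
theorem stmt_6 {X Y : RelCat} (f g : X ⟶ Y) :
    ∃ (Q : RelCat) (q : Y ⟶ Q), f ≫ q = g ≫ q ∧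
      ∀ (Z : RelCat) (h : Y ⟶ Z), f ≫ h = g ≫ h → ∃ hbar : Q ⟶ Z, q ≫ hbar = h := by
  refine ⟨BalancedSets f g, balancedMem f g, ?_, fun Z h hh => ?_⟩
  · apply RelCat.Hom.ext
    ext ⟨x, S⟩
    exact S.2 x
  · have fibre_balanced : ∀ (z : Z) (x : X), (∃ y, (x, y) ∈ f.rel ∧ (y, z) ∈ h.rel) ↔
        ∃ y, (x, y) ∈ g.rel ∧ (y, z) ∈ h.rel := fun z x =>
      (RelCat.Hom.rel_comp_apply₂ f h x z).symm.trans
        ((iff_of_eq (congrArg (fun k => (x, z) ∈ RelCat.Hom.rel k) hh)).trans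
          (RelCat.Hom.rel_comp_apply₂ g h x z))
    refine ⟨RelCat.Hom.ofRel
      {p : BalancedSets f g × Z | p.1.1 = fun y => (y, p.2) ∈ h.rel}, ?_⟩
    apply RelCat.Hom.ext
    ext ⟨y, z⟩
    refine (RelCat.Hom.rel_comp_apply₂ _ _ y z).trans ⟨?_, fun hy => ?_⟩
    · rintro ⟨S, hyS, hS⟩
      have hyS' : S.1 y := hyS
      have hS' : S.1 = fun y => (y, z) ∈ h.rel := hS
      rw [hS'] at hyS'
      exact hyS'
    · exact ⟨⟨fun y => (y, z) ∈ h.rel, fibre_balanced z⟩, hy, rfl⟩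
end

section
/- Let S be a set and T a geometric theory over S, given by an index set T where each axiom t ∈ T consists of a finite subset A_t ⊆ S, an index set I_t, and finite subsets B_{t,i} ⊆ S for i ∈ I_t. Define a set R of rules on the set Fin(S) of finite subsets of S by R = {(∅, {∅})} ∪ {({A},{B}) | A, B ∈ Fin(S), B ⊆ A} ∪ {({A,B},{A ∪ B}) | A, B ∈ Fin(S)} ∪ {({A_t}, {B_{t,i} | i ∈ I_t}) | t ∈ T}. Then the maps Φ(α) = ⋃_{A ∈ α} A and Ψ(m) = {A ∈ Fin(S) | A ⊆ m} are mutually inverse bijections between the class of R-closed subsets of Fin(S) and the class of models of T: if α is R-closed then Φ(α) is a model of T and Ψ(Φ(α)) = α, and if m is a model of T then Ψ(m) is R-closed and Φ(Ψ(m)) = m. -/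
/-!
The structural rules (for `∅`, subsets and binary unions) say exactly that an `R`-closed `α` is an
ideal of the lattice `Finset S`. For such an ideal, a finite set covered by the members of `α` is
already a member: `mem_of_subset_sUnion` proves this by induction, adding one element at a time as
the singleton below some member. Hence `A ⊆ Φ(α) ↔ A ∈ α` for finite `A`, which gives
`Ψ(Φ(α)) = α` and turns closure under the rules of the axioms into the model condition. In the
other direction, the finite subsets of `m` always form an ideal whose union is `m`, by singletons.
-/

/-- A subset `α` is closed under a rule `(a, b)`: if `a ⊆ α` then `b ∩ α` is nonempty. -/
def RuleClosed {S : Type*} (p : Set S × Set S) (α : Set S) : Prop :=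
  p.1 ⊆ α → (p.2 ∩ α).Nonempty

/-- `α` is `R`-closed if it is closed under every rule in `R`. -/
def RClosed {S : Type*} (R : Set (Set S × Set S)) (α : Set S) : Prop :=
  ∀ p ∈ R, RuleClosed p α

/-- A model of the geometric theory with axioms `⋀ A t ⊢ ⋁_{i ∈ I t} ⋀ B t i`. -/
def GeomModel {S : Type*} {T : Type*} {I : T → Type*}
    (A : T → Finset S) (B : ∀ t, I t → Finset S) (m : Set S) : Prop :=
  ∀ t : T, ↑(A t) ⊆ m → ∃ i : I t, ↑(B t i) ⊆ m

/-- The set of rules on `Fin(S)` associated with a geometric theory. -/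
def geomRules {S : Type*} [DecidableEq S] {T : Type*} {I : T → Type*}
    (A : T → Finset S) (B : ∀ t, I t → Finset S) :
    Set (Set (Finset S) × Set (Finset S)) :=
  {p | p = ((∅ : Set (Finset S)), ({(∅ : Finset S)} : Set (Finset S)))} ∪
  {p | ∃ A' B' : Finset S, B' ⊆ A' ∧ p = ({A'}, {B'})} ∪
  {p | ∃ A' B' : Finset S, p = (({A', B'} : Set (Finset S)), ({A' ∪ B'} : Set (Finset S)))} ∪
  {p | ∃ t : T, p = (({A t} : Set (Finset S)), {b | ∃ i : I t, b = B t i})}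

/-- A finite set covered by an ideal of finite sets belongs to that ideal. -/
theorem mem_of_subset_sUnion {S : Type*} [DecidableEq S] {α : Set (Finset S)}
    (h0 : ∅ ∈ α) (hsub : ∀ C ∈ α, ∀ D, D ⊆ C → D ∈ α)
    (hun : ∀ C ∈ α, ∀ D ∈ α, C ∪ D ∈ α) (C : Finset S)
    (hC : ∀ x ∈ C, ∃ D ∈ α, x ∈ D) : C ∈ α := by
  induction C using Finset.induction_on with
  | empty => exact h0
  | insert a s _ ih =>
    obtain ⟨D, hD, haD⟩ := hC a (Finset.mem_insert_self a s)
    rw [Finset.insert_eq]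
    exact hun _ (hsub D hD _ (Finset.singleton_subset_iff.2 haD)) _
      (ih fun x hx => hC x (Finset.mem_insert_of_mem hx))

theorem stmt_9 {S : Type*} [DecidableEq S] {T : Type*} {I : T → Type*}
    (A : T → Finset S) (B : ∀ t, I t → Finset S) :
    (∀ α : Set (Finset S), RClosed (geomRules A B) α →
      GeomModel A B {x | ∃ A' ∈ α, x ∈ A'} ∧
      {A' : Finset S | ↑A' ⊆ {x | ∃ A'' ∈ α, x ∈ A''}} = α) ∧
    (∀ m : Set S, GeomModel A B m →
      RClosed (geomRules A B) {A' : Finset S | ↑A' ⊆ m} ∧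
      {x | ∃ A' ∈ {A'' : Finset S | ↑A'' ⊆ m}, x ∈ A'} = m) := by
  refine ⟨fun α hα => ?_, fun m hm => ⟨?_, ?_⟩⟩
  · have h0 : ∅ ∈ α := by
      obtain ⟨b, rfl, hb⟩ := hα (∅, {∅}) (Or.inl (Or.inl (Or.inl rfl))) (Set.empty_subset α)
      exact hb
    have hsub : ∀ C ∈ α, ∀ D, D ⊆ C → D ∈ α := by
      intro C hC D hDC
      obtain ⟨b, rfl, hb⟩ := hα ({C}, {D}) (Or.inl (Or.inl (Or.inr ⟨C, D, hDC, rfl⟩)))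
        (Set.singleton_subset_iff.2 hC)
      exact hb
    have hun : ∀ C ∈ α, ∀ D ∈ α, C ∪ D ∈ α := by
      intro C hC D hD
      obtain ⟨b, rfl, hb⟩ := hα ({C, D}, {C ∪ D}) (Or.inl (Or.inr ⟨C, D, rfl⟩))
        (Set.pair_subset hC hD)
      exact hb
    refine ⟨fun t ht => ?_, ?_⟩
    · obtain ⟨b, ⟨i, rfl⟩, hb⟩ := hα ({A t}, {b | ∃ i : I t, b = B t i}) (Or.inr ⟨t, rfl⟩)
        (Set.singleton_subset_iff.2 (mem_of_subset_sUnion h0 hsub hun (A t) fun x hx => ht hx))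
      exact ⟨i, fun x hx => ⟨_, hb, hx⟩⟩
    · ext C
      exact ⟨fun hC => mem_of_subset_sUnion h0 hsub hun C fun x hx => hC hx,
        fun hC x hx => ⟨C, hC, hx⟩⟩
  · rintro p (((rfl | ⟨C, D, hDC, rfl⟩) | ⟨C, D, rfl⟩) | ⟨t, rfl⟩) hp
    · exact ⟨∅, rfl, by simp⟩
    · have hC : (C : Set S) ⊆ m := hp rfl
      exact ⟨D, rfl, fun x hx => hC (hDC hx)⟩
    · have hC : (C : Set S) ⊆ m := hp (Or.inl rfl)
      have hD : (D : Set S) ⊆ m := hp (Or.inr rfl)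
      exact ⟨C ∪ D, rfl, by simp [hC, hD]⟩
    · obtain ⟨i, hi⟩ := hm t (hp rfl)
      exact ⟨B t i, ⟨i, rfl⟩, hi⟩
  · ext x
    exact ⟨fun ⟨C, hC, hx⟩ => hC hx, fun hx => ⟨{x}, by simpa using hx, by simp⟩⟩
end

section
/- Let S be a set and T a geometric theory over S, given by an index set T where each axiom t ∈ T consists of a finite subset A_t ⊆ S, an index set I_t, and finite subsets B_{t,i} ⊆ S for i ∈ I_t. Let R be the set of rules on Fin(S) given by R = {(∅, {∅})} ∪ {({A},{B}) | B ⊆ A} ∪ {({A,B},{A ∪ B})} ∪ {({A_t}, {B_{t,i} | i ∈ I_t}) | t ∈ T}. If G is a generating subset of the class of R-closed subsets of Fin(S), then {⋃_{A ∈ α} A | α ∈ G} is a generating subset of the class of models of T. -/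
/-- A closed `α` is an ideal of `Fin(S)`, hence contains every finite subset of its union. -/
theorem RClosed.mem_of_subset {S : Type*} [DecidableEq S] {T : Type*} {I : T → Type*}
    {A : T → Finset S} {B : ∀ t, I t → Finset S} {α : Set (Finset S)}
    (h : RClosed (geomRules A B) α) (F : Finset S)
    (hF : (F : Set S) ⊆ {x | ∃ A' ∈ α, x ∈ A'}) : F ∈ α := by
  induction F using Finset.induction_on with
  | empty =>
    obtain ⟨b, hb, hbα⟩ := h _ (Or.inl (Or.inl (Or.inl rfl))) (Set.empty_subset _)
    exact Set.mem_singleton_iff.1 hb ▸ hbα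
  | insert x F _ ih =>
    rw [Finset.coe_insert, Set.insert_subset_iff] at hF
    obtain ⟨⟨C, hC, hx⟩, hF⟩ := hF
    obtain ⟨b, hb, hbα⟩ := h _
      (Or.inl (Or.inl (Or.inr ⟨C, {x}, Finset.singleton_subset_iff.2 hx, rfl⟩)))
      (Set.singleton_subset_iff.2 hC)
    obtain rfl : b = {x} := hb
    obtain ⟨c, hc, hcα⟩ := h _ (Or.inl (Or.inr ⟨{x}, F, rfl⟩))
      (Set.insert_subset_iff.2 ⟨hbα, Set.singleton_subset_iff.2 (ih hF)⟩)
    obtain rfl : c = {x} ∪ F := hc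
    rwa [Finset.insert_eq]

theorem GeomModel.rClosed {S : Type*} [DecidableEq S] {T : Type*} {I : T → Type*}
    {A : T → Finset S} {B : ∀ t, I t → Finset S} {m : Set S} (hm : GeomModel A B m) :
    RClosed (geomRules A B) {F : Finset S | (F : Set S) ⊆ m} := by
  rintro p (((rfl | ⟨C, D, hDC, rfl⟩) | ⟨C, D, rfl⟩) | ⟨t, rfl⟩) hp
  · exact ⟨∅, rfl, by simp⟩
  · exact ⟨D, rfl, (Finset.coe_subset.2 hDC).trans (hp rfl)⟩
  · refine ⟨C ∪ D, rfl, ?_⟩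
    change ((C ∪ D : Finset S) : Set S) ⊆ m
    rw [Finset.coe_union]
    exact Set.union_subset (hp (Or.inl rfl)) (hp (Or.inr rfl))
  · obtain ⟨i, hi⟩ := hm t (hp rfl)
    exact ⟨B t i, ⟨i, rfl⟩, hi⟩

theorem stmt_10 {S : Type*} [DecidableEq S] {T : Type*} {I : T → Type*}
    (A : T → Finset S) (B : ∀ t, I t → Finset S) (G : Set (Set (Finset S)))
    -- G is a subset of the class of R-closed subsets of Fin(S)
    (hGsub : ∀ α ∈ G, RClosed (geomRules A B) α)
    -- G generates that class
    (hGgen : ∀ α : Set (Finset S), RClosed (geomRules A B) α →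
      ∀ A' ∈ α, ∃ β ∈ G, A' ∈ β ∧ β ⊆ α) :
    -- {⋃ α | α ∈ G} is a generating subset of the class of models
    (∀ m ∈ {m | ∃ α ∈ G, m = {x | ∃ A' ∈ α, x ∈ A'}}, GeomModel A B m) ∧
    (∀ m : Set S, GeomModel A B m → ∀ x ∈ m,
      ∃ m' ∈ {m' | ∃ α ∈ G, m' = {x | ∃ A' ∈ α, x ∈ A'}}, x ∈ m' ∧ m' ⊆ m) := by
  constructor
  · rintro m ⟨α, hα, rfl⟩ t ht
    have h := hGsub α hα
    obtain ⟨b, ⟨i, rfl⟩, hb⟩ := h _ (Or.inr ⟨t, rfl⟩)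
      (Set.singleton_subset_iff.2 (h.mem_of_subset _ ht))
    exact ⟨i, fun x hx => ⟨B t i, hb, hx⟩⟩
  · intro m hm x hx
    obtain ⟨β, hβ, hxβ, hβm⟩ := hGgen _ hm.rClosed {x} (by simpa using hx)
    refine ⟨_, ⟨β, hβ, rfl⟩, ⟨{x}, hxβ, by simp⟩, ?_⟩
    rintro y ⟨F, hF, hy⟩
    exact hβm hF hy
end

section
/- Let S be a set and R a set of finitary rules on S, i.e., a set of pairs (a,b) with a ∈ Fin(S) a finite subset of S and b ⊆ S. Consider the preorder (Fin(S), ⊇) and the axiom-set on Fin(S) given by I(A) = {(a,b) ∈ R | a = A} and C(A,(a,b)) = {{y} | y ∈ b}. Then the maps α ↦ ⋃_{A ∈ α} A and β ↦ {A ∈ Fin(S) | A ⊆ β} are mutually inverse bijections between the formal points of this structure and the R-closed subsets of S: if α is a formal point then ⋃α is R-closed and {A | A ⊆ ⋃α} = α, and if β is R-closed then {A | A ⊆ β} is a formal point and ⋃{A | A ⊆ β} = β. Here α ⊆ Fin(S) is a formal point precisely when: α is inhabited; for all A, B ∈ α there exists C ∈ α with A ⊆ C and B ⊆ C; if A ∈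 α and B ⊆ A then B ∈ α; and if A ∈ α and (a,b) ∈ R with a = A, then there exists y ∈ b with {y} ∈ α. -/
/-!
A formal point `α` is an ideal of finite sets: inhabited, directed and downward closed. A finite
subset of `⋃ α` is covered by finitely many members of `α`, so by directedness it lies inside a
single member, and by downward closure it belongs to `α` itself (`FinFormalPoint.mem_of_subset`).
Hence `α` is recovered from its union, and a rule whose premise lies in `⋃ α` has its premise in
`α`, so the axiom condition yields closedness. In the other direction, a union of two finite
subsets of `β` and each singleton of a point of `β` are again finite subsets of `β`.
-/

/-- `β ⊆ S` is closed under a set `R` of finitary rules: for each `(a,b) ∈ R`,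
if `a ⊆ β` then `b ∩ β` is nonempty. -/
def RClosedFin {S : Type*} (R : Set (Finset S × Set S)) (β : Set S) : Prop :=
  ∀ p ∈ R, ↑p.1 ⊆ β → (p.2 ∩ β).Nonempty

/-- A formal point of the preorder `(Fin(S), ⊇)` with the axiom-set
`I(A) = {(a,b) ∈ R | a = A}`, `C(A,(a,b)) = {{y} | y ∈ b}`. -/
def FinFormalPoint {S : Type*} (R : Set (Finset S × Set S)) (α : Set (Finset S)) : Prop :=
  α.Nonempty ∧
  (∀ A ∈ α, ∀ B ∈ α, ∃ C ∈ α, A ⊆ C ∧ B ⊆ C) ∧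
  (∀ A ∈ α, ∀ B : Finset S, B ⊆ A → B ∈ α) ∧
  (∀ A ∈ α, ∀ p ∈ R, p.1 = A → ∃ y ∈ p.2, ({y} : Finset S) ∈ α)

/-- Finite sets are compact with respect to the directed union `⋃ α`: the only place where
finiteness of the premises is used. -/
theorem FinFormalPoint.mem_of_subset {S : Type*} {R : Set (Finset S × Set S)}
    {α : Set (Finset S)} (h : FinFormalPoint R α) (A : Finset S)
    (hA : (A : Set S) ⊆ {x | ∃ B ∈ α, x ∈ B}) : A ∈ α := by
  classical
  obtain ⟨⟨A₀, hA₀⟩, hdir, hdown, -⟩ := h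
  induction A using Finset.induction_on with
  | empty => exact hdown A₀ hA₀ ∅ (Finset.empty_subset _)
  | insert x s _ ih =>
    have hs : s ∈ α := ih fun y hy => hA (by simpa using Or.inr hy)
    obtain ⟨B, hB, hxB⟩ := hA (show x ∈ ((insert x s : Finset S) : Set S) by simp)
    obtain ⟨C, hC, hsC, hBC⟩ := hdir s hs B hB
    exact hdown C hC _ (Finset.insert_subset (hBC hxB) hsC)

theorem stmt_13 {S : Type*} (R : Set (Finset S × Set S)) :
    (∀ α : Set (Finset S), FinFormalPoint R α →
      RClosedFin R {x | ∃ A ∈ α, x ∈ A} ∧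
      {A : Finset S | ↑A ⊆ {x | ∃ B ∈ α, x ∈ B}} = α) ∧
    (∀ β : Set S, RClosedFin R β →
      FinFormalPoint R {A : Finset S | ↑A ⊆ β} ∧
      {x | ∃ A ∈ {A : Finset S | ↑A ⊆ β}, x ∈ A} = β) := by
  classical
  refine ⟨fun α h => ⟨?_, ?_⟩, fun β h => ⟨⟨?_, ?_, ?_, ?_⟩, ?_⟩⟩
  · intro p hp hsub
    obtain ⟨y, hy, hyα⟩ := h.2.2.2 p.1 (h.mem_of_subset p.1 hsub) p hp rfl
    exact ⟨y, hy, {y}, hyα, Finset.mem_singleton_self y⟩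
  · ext A
    exact ⟨h.mem_of_subset A, fun hA x hx => ⟨A, hA, hx⟩⟩
  · exact ⟨∅, by simp⟩
  · intro A hA B hB
    refine ⟨A ∪ B, ?_, Finset.subset_union_left, Finset.subset_union_right⟩
    simpa using And.intro hA hB
  · exact fun A hA B hBA x hx => hA (hBA hx)
  · rintro A hA p hp rfl
    obtain ⟨y, hy, hyβ⟩ := h p hp hA
    exact ⟨y, hy, by simpa using hyβ⟩
  · ext x
    exact ⟨fun ⟨A, hA, hx⟩ => hA hx, fun hx => ⟨{x}, by simpa using hx, by simp⟩⟩
end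

section
/- Let S be a set, R a set of finitary rules on S (pairs (a,b) with a ∈ Fin(S) finite and b ⊆ S), and let G be a generating subset of the class of formal points of the preorder (Fin(S), ⊇) with the axiom-set I(A) = {(a,b) ∈ R | a = A}, C(A,(a,b)) = {{y} | y ∈ b}. Then {⋃_{A ∈ α} A | α ∈ G} is a generating subset of the class of R-closed subsets of S. -/
/-- Compactness of finite sets: a formal point, being an ideal, contains every finite subset of
its union. -/
lemma mem_of_subset_union {S : Type*} {R : Set (Finset S × Set S)} {α : Set (Finset S)}
    (hα : FinFormalPoint R α) (a : Finset S) (ha : ∀ x ∈ a, ∃ A ∈ α, x ∈ A) : a ∈ α := by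
  classical
  obtain ⟨⟨A₀, hA₀⟩, hdir, hdown, -⟩ := hα
  induction a using Finset.induction_on with
  | empty => exact hdown A₀ hA₀ ∅ (Finset.empty_subset _)
  | insert x s _ ih =>
    have hs : s ∈ α := ih fun y hy => ha y (Finset.mem_insert_of_mem hy)
    obtain ⟨A, hA, hxA⟩ := ha x (Finset.mem_insert_self x s)
    obtain ⟨C, hC, hAC, hsC⟩ := hdir A hA s hs
    exact hdown C hC _ (Finset.insert_subset (hAC hxA) hsC)

lemma finFormalPoint_finite_subsets {S : Type*} {R : Set (Finset S × Set S)} {β : Set S}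
    (hβ : RClosedFin R β) : FinFormalPoint R {A | (A : Set S) ⊆ β} := by
  classical
  refine ⟨⟨∅, by simp⟩, fun A hA B hB => ⟨A ∪ B, ?_, Finset.subset_union_left,
    Finset.subset_union_right⟩, fun A hA B hBA => ?_, ?_⟩
  · simpa using And.intro hA hB
  · exact (Finset.coe_subset.2 hBA).trans hA
  · rintro _ hA p hp rfl
    obtain ⟨y, hy, hyβ⟩ := hβ p hp hA
    exact ⟨y, hy, by simpa using hyβ⟩

theorem stmt_14 {S : Type*} (R : Set (Finset S × Set S)) (G : Set (Set (Finset S)))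
    -- G is a generating subset of the class of formal points
    (hGsub : ∀ α ∈ G, FinFormalPoint R α)
    (hGgen : ∀ α : Set (Finset S), FinFormalPoint R α →
      ∀ A ∈ α, ∃ β ∈ G, A ∈ β ∧ β ⊆ α) :
    -- {⋃ α | α ∈ G} is a generating subset of the class of R-closed subsets of S
    (∀ m ∈ {m | ∃ α ∈ G, m = {x | ∃ A ∈ α, x ∈ A}}, RClosedFin R m) ∧
    (∀ β : Set S, RClosedFin R β → ∀ x ∈ β,
      ∃ m ∈ {m | ∃ α ∈ G, m = {x | ∃ A ∈ α, x ∈ A}}, x ∈ m ∧ m ⊆ β) := by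
  constructor
  · rintro _ ⟨α, hα, rfl⟩ p hp hpα
    have hpt := hGsub α hα
    obtain ⟨y, hy, hyα⟩ := hpt.2.2.2 p.1 (mem_of_subset_union hpt p.1 hpα) p hp rfl
    exact ⟨y, hy, {y}, hyα, Finset.mem_singleton_self y⟩
  · intro β hβ x hx
    obtain ⟨α, hα, hxα, hαβ⟩ := hGgen _ (finFormalPoint_finite_subsets hβ) {x} (by simpa using hx)
    refine ⟨_, ⟨α, hα, rfl⟩, ⟨{x}, hxα, Finset.mem_singleton_self x⟩, ?_⟩
    rintro y ⟨A, hA, hyA⟩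
    exact hαβ hA hyA
end
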